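/- arXiv:0902.3953 — 2 statements merged into one kernel-verified Lean document; each statement's English description precedes it below -/
import Mathlib

section
/- Let q ≥ 3 be an integer, a_0 ∈ ℤ, and let (a_i)_{i≥1} be an infinite q-regular sequence of nonzero integers. Then for the convergents of the λ_q-continued fraction [a_0; a_1, a_2, …] one has q_n ≠ 0 for all n ≥ 0 and the sequence p_n/q_n converges in ℝ; that is, every regular λ_q-CF converges. -/
open Filter Topology

/-- `λ_q = 2 cos (π/q)`. -/
noncomputable def lamq (q : ℕ) : ℝ := 2 * Real.cos (Real.pi / q)

/-- `h_q = (q-2)/2` for even `q` and `(q-3)/2` for odd `q`. -/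
def hQ (q : ℕ) : ℕ := if Even q then (q - 2) / 2 else (q - 3) / 2

/-- Forbidden blocks for the nearest `λ_q`-multiple continued fractions.
For `ε ∈ {1,-1}`: the block `(ε)^{h_q+1}`; for even `q` the blocks `((ε)^{h_q}, ε·m)`, `m ≥ 1`;
for odd `q` (including `q = 3`, where `h_q = 0`) the blocks `((ε)^{h_q}, ε·2, (ε)^{h_q}, ε·m)`,
`m ≥ 1`. -/
def IsForbidden (q : ℕ) (L : List ℤ) : Prop :=
  ∃ ε : ℤ, (ε = 1 ∨ ε = -1) ∧
    (L = List.replicate (hQ q + 1) ε ∨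
      (if Even q then
        ∃ m : ℤ, 1 ≤ m ∧ L = List.replicate (hQ q) ε ++ [ε * m]
      else
        ∃ m : ℤ, 1 ≤ m ∧
          L = List.replicate (hQ q) ε ++ ε * 2 :: (List.replicate (hQ q) ε ++ [ε * m])))

/-- An infinite sequence is `q`-regular if no finite subblock is forbidden. -/
def RegularSeq (q : ℕ) (a : ℕ → ℤ) : Prop :=
  ∀ (l len : ℕ), ¬ IsForbidden q (List.ofFn fun j : Fin len => a (l + (j : ℕ)))

/-- An infinite sequence is dual `q`-regular if no reversed finite subblock is forbidden. -/
def DualRegularSeq (q : ℕ) (a : ℕ → ℤ) : Prop :=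
  ∀ (l len : ℕ), ¬ IsForbidden q (List.ofFn fun j : Fin len => a (l + (j : ℕ))).reverse

/-- A finite sequence is `q`-regular if no contiguous subblock is forbidden. -/
def RegularList (q : ℕ) (L : List ℤ) : Prop :=
  ∀ B : List ℤ, B <:+: L → ¬ IsForbidden q B

/-- Numerators of the convergents: `p₀ = a₀λ`, `p₁ = a₁λ·p₀ - 1`,
`pₙ = aₙλ·pₙ₋₁ - pₙ₋₂` (so that `p₋₁ = 1`, `p₋₂ = 0`).  Here `A n` is the digit `aₙ`. -/
noncomputable def cfP (lam : ℝ) (A : ℕ → ℤ) : ℕ → ℝ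
  | 0 => (A 0 : ℝ) * lam
  | 1 => (A 1 : ℝ) * lam * ((A 0 : ℝ) * lam) - 1
  | (n + 2) => (A (n + 2) : ℝ) * lam * cfP lam A (n + 1) - cfP lam A n

/-- Denominators of the convergents: `q₀ = 1`, `q₁ = a₁λ`,
`qₙ = aₙλ·qₙ₋₁ - qₙ₋₂` (so that `q₋₁ = 0`, `q₋₂ = -1`). -/
noncomputable def cfQ (lam : ℝ) (A : ℕ → ℤ) : ℕ → ℝ
  | 0 => 1
  | 1 => (A 1 : ℝ) * lam
  | (n + 2) => (A (n + 2) : ℝ) * lam * cfQ lam A (n + 1) - cfQ lam A n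

/-- The λ-continued fraction with digit sequence `A` converges to `x`. -/
def CFConvergesTo (lam : ℝ) (A : ℕ → ℤ) (x : ℝ) : Prop :=
  (∀ n, cfQ lam A n ≠ 0) ∧
    Filter.Tendsto (fun n => cfP lam A n / cfQ lam A n) Filter.atTop (nhds x)

/-- The value `p_L/q_L` of the finite continued fraction `[a₀; a₁, …, a_L]`. -/
noncomputable def cfValList (lam : ℝ) (a0 : ℤ) (L : List ℤ) : ℝ :=
  cfP lam (fun i => (a0 :: L).getD i 0) L.length /
    cfQ lam (fun i => (a0 :: L).getD i 0) L.length

/-- The last denominator `q_L` of the finite continued fraction `[a₀; a₁, …, a_L]`. -/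
noncomputable def cfDenList (lam : ℝ) (a0 : ℤ) (L : List ℤ) : ℝ :=
  cfQ lam (fun i => (a0 :: L).getD i 0) L.length

/-- The modified floor: `⌊t⌋* = ⌈t⌉ - 1` for `t > 0` and `⌊t⌋* = ⌊t⌋` for `t ≤ 0`. -/
noncomputable def floorstar (t : ℝ) : ℤ := if 0 < t then ⌈t⌉ - 1 else ⌊t⌋

/-- The nearest `λ`-multiple: `⟨y⟩ = ⌊y/λ + 1/2⌋*`. -/
noncomputable def nearestLam (lam : ℝ) (x : ℝ) : ℤ := floorstar (x / lam + 1 / 2)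

/-- The interval map `f_q` on `I_q = [-λ/2, λ/2]`. -/
noncomputable def fq (lam : ℝ) (x : ℝ) : ℝ :=
  if x = 0 then 0 else -1 / x - (nearestLam lam (-1 / x) : ℝ) * lam

/-- `R_q`: equal to `1` for even `q`, and the positive root of `R² + (2-λ_q)R = 1` for odd `q`. -/
noncomputable def Rq (q : ℕ) : ℝ :=
  if Even q then 1 else (lamq q - 2 + Real.sqrt ((2 - lamq q) ^ 2 + 4)) / 2

/-- `r_q = R_q - λ_q`. -/
noncomputable def rq (q : ℕ) : ℝ := Rq q - lamq q

/-- The map `⟨·⟩*` used by the dual algorithm. -/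
noncomputable def nearestDual (lam R y : ℝ) : ℤ :=
  if 0 ≤ y then floorstar (y / lam + 1 - R / lam) else floorstar (y / lam + R / lam)

/-- The dual interval map `f_q^*` on `I_{R_q} = [-R_q, R_q]`. -/
noncomputable def fqstar (lam R : ℝ) (x : ℝ) : ℝ :=
  if x = 0 then 0 else -1 / x - (nearestDual lam R (-1 / x) : ℝ) * lam

/-- The matrix `S = [[0,-1],[1,0]]` as an element of `SL(2,ℝ)`. -/
noncomputable def matS : Matrix.SpecialLinearGroup (Fin 2) ℝ :=
  ⟨!![0, -1; 1, 0], by norm_num [Matrix.det_fin_two_of]⟩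

/-- The matrix `T = [[1,λ],[0,1]]` as an element of `SL(2,ℝ)`. -/
noncomputable def matT (lam : ℝ) : Matrix.SpecialLinearGroup (Fin 2) ℝ :=
  ⟨!![1, lam; 0, 1], by norm_num [Matrix.det_fin_two_of]⟩

/-- The Hecke triangle group `G_q`, the subgroup of `SL(2,ℝ)` generated by `S` and `T_q`. -/
noncomputable def Hecke (q : ℕ) : Subgroup (Matrix.SpecialLinearGroup (Fin 2) ℝ) :=
  Subgroup.closure {matS, matT (lamq q)}

/-- The Möbius action of `g` on `x ∈ ℝ`. -/
noncomputable def moeb (g : Matrix.SpecialLinearGroup (Fin 2) ℝ) (x : ℝ) : ℝ :=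
  (g.val 0 0 * x + g.val 0 1) / (g.val 1 0 * x + g.val 1 1)

/-- `x` and `y` are `G_q`-equivalent. -/
def GqEquiv (q : ℕ) (x y : ℝ) : Prop :=
  ∃ g ∈ Hecke q, (g.val 1 0 * x + g.val 1 1 ≠ 0) ∧ moeb g x = y

/-- Two sequences have a common tail. -/
def CommonTail (a b : ℕ → ℤ) : Prop := ∃ m n : ℕ, ∀ k : ℕ, a (m + k) = b (n + k)

/-- The period block of `ρ_q`: `(3)` for `q = 3`, `((1)^{h_q-1}, 2)` for even `q`
and `((1)^{h_q}, 2, (1)^{h_q-1}, 2)` for odd `q ≥ 5`. -/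
def rhoBlock (q : ℕ) : List ℤ :=
  if q = 3 then [3]
  else if Even q then List.replicate (hQ q - 1) 1 ++ [2]
  else List.replicate (hQ q) 1 ++ 2 :: (List.replicate (hQ q - 1) 1 ++ [2])

/-- The periodic sequence `ρ_q`. -/
def rho (q : ℕ) (i : ℕ) : ℤ := (rhoBlock q).getD (i % (rhoBlock q).length) 0

/-- `x` has the infinite regular `λ_q`-CF with digit sequence `A` (with `A 0 = a₀`). -/
def HasRegCF (q : ℕ) (x : ℝ) (A : ℕ → ℤ) : Prop :=
  (∀ i, A (i + 1) ≠ 0) ∧ RegularSeq q (fun i => A (i + 1)) ∧ CFConvergesTo (lamq q) A x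

/-- `x` has the infinite dual regular `λ_q`-CF with digit sequence `A` (with `A 0 = a₀`). -/
def HasDualRegCF (q : ℕ) (x : ℝ) (A : ℕ → ℤ) : Prop :=
  (∀ i, A (i + 1) ≠ 0) ∧ DualRegularSeq q (fun i => A (i + 1)) ∧ CFConvergesTo (lamq q) A x

/-- The digits of `x` produced by the algorithm for `f_q`: `a_{i+1} = ⟨-1 / f_q^i(x)⟩`. -/
noncomputable def digitSeq (lam : ℝ) (x : ℝ) : ℕ → ℤ :=
  fun i => nearestLam lam (-1 / (fq lam)^[i] x)

/-- The digits of `x` produced by the algorithm for `f_q^*`: `b_{i+1} = ⟨-1 / (f_q^*)^i(x)⟩*`. -/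
noncomputable def digitSeqStar (lam R : ℝ) (x : ℝ) : ℕ → ℤ :=
  fun i => nearestDual lam R (-1 / (fqstar lam R)^[i] x)

/-!
The reversed ratios `t n = q_{n-1} / q_n` satisfy `t (n + 1) = 1 / (a_{n+1} λ - t n)`, and the
convergents converge geometrically once `|t n| ≤ 1` and `|a_{n+1} λ - t n| ≥ |t n| + δ` for a
fixed `δ > 0`.

Regularity says that, up to a global sign, the digits never drop lexicographically below the
critical word, which is `1^h` for even `q` and `1^h 2 1^h` for odd `q`, and never complete it
before another digit of the same sign. While the digits copy the critical word, `t n` is bounded by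
a ratio `sin x / sin (x + θ)` with `θ = π / q`, and the digit `1` moves `x` to `x + θ`.
The phase starts at `θ / 2`, is reset to `θ` by the digit `2`, and the word ends exactly when
`2 x + θ = π`, where the ratio is `1`. A digit exceeding the critical one, or of opposite sign, puts
`t n` below the initial bound again. This gives `|t n| ≤ 1` and the gap `δ = 2 - λ`.
-/

section Convergents

/-- The reversed ratio `q_{n-1} / q_n` of consecutive denominators of the continued fraction whose
digits are `a_{i+1} = a i`, given by its recursion so that no division by a possibly vanishing
denominator is involved. -/
noncomputable def backRatio (lam : ℝ) (a : ℕ → ℤ) : ℕ → ℝ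
  | 0 => 0
  | n + 1 => (a n * lam - backRatio lam a n)⁻¹

variable {lam : ℝ}

theorem backRatio_neg (a : ℕ → ℤ) (n : ℕ) : backRatio lam (-a) n = -backRatio lam a n := by
  induction n with
  | zero => simp only [backRatio, neg_zero]
  | succ n ih =>
    rw [backRatio, backRatio, ih, ← inv_neg, Pi.neg_apply]
    push_cast
    ring_nf

theorem cfP_mul_cfQ_succ_sub (A : ℕ → ℤ) (n : ℕ) :
    cfP lam A n * cfQ lam A (n + 1) - cfP lam A (n + 1) * cfQ lam A n = 1 := by
  induction n with
  | zero => simp only [cfP, cfQ]; ring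
  | succ n ih => rw [cfP, cfQ]; linear_combination ih

variable {A : ℕ → ℤ}

theorem cfQ_succ_eq_mul (hD : ∀ n, A (n + 1) * lam - backRatio lam (fun i => A (i + 1)) n ≠ 0)
    (n : ℕ) :
    cfQ lam A (n + 1) =
      cfQ lam A n * (A (n + 1) * lam - backRatio lam (fun i => A (i + 1)) n) := by
  induction n with
  | zero => simp only [cfQ, backRatio]; ring
  | succ n ih =>
    have hprev : cfQ lam A n = cfQ lam A (n + 1) * backRatio lam (fun i => A (i + 1)) (n + 1) := by
      rw [ih, backRatio, mul_inv_cancel_right₀ (hD n)]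
    rw [cfQ]
    linear_combination -hprev

theorem cfQ_ne_zero (hD : ∀ n, A (n + 1) * lam - backRatio lam (fun i => A (i + 1)) n ≠ 0)
    (n : ℕ) : cfQ lam A n ≠ 0 := by
  induction n with
  | zero => simp only [cfQ, ne_eq, one_ne_zero, not_false_eq_true]
  | succ n ih => rw [cfQ_succ_eq_mul hD]; exact mul_ne_zero ih (hD n)

theorem dist_convergents (h : ∀ n, cfQ lam A n ≠ 0) (n : ℕ) :
    dist (cfP lam A n / cfQ lam A n) (cfP lam A (n + 1) / cfQ lam A (n + 1)) =
      |(cfQ lam A n * cfQ lam A (n + 1))⁻¹| := by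
  rw [Real.dist_eq, div_sub_div _ _ (h n) (h (n + 1)), mul_comm (cfQ lam A n) (cfP lam A (n + 1)),
    cfP_mul_cfQ_succ_sub, one_div]

variable {δ : ℝ}

theorem one_add_mul_abs_cfQ_le (hδ : 0 < δ)
    (hle : ∀ n, |backRatio lam (fun i => A (i + 1)) n| ≤ 1)
    (hgap : ∀ n, |backRatio lam (fun i => A (i + 1)) n| + δ ≤
      |A (n + 1) * lam - backRatio lam (fun i => A (i + 1)) n|) (n : ℕ) :
    (1 + δ) * |cfQ lam A n| ≤ |cfQ lam A (n + 2)| := by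
  have hDpos (n) : 0 < |A (n + 1) * lam - backRatio lam (fun i => A (i + 1)) n| :=
    (add_pos_of_nonneg_of_pos (abs_nonneg _) hδ).trans_le (hgap n)
  have hQ := cfQ_succ_eq_mul fun n => abs_pos.mp (hDpos n)
  have hone := hle (n + 1)
  have hnext := hgap (n + 1)
  rw [backRatio, abs_inv] at hone hnext
  rw [hQ (n + 1), hQ n, abs_mul, abs_mul, mul_assoc, mul_comm, backRatio]
  set D := |A (n + 1) * lam - backRatio lam (fun i => A (i + 1)) n|
  have hD1 : 1 ≤ D := (inv_le_one₀ (hDpos n)).mp hone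
  have hprod : 1 + δ ≤ D * (D⁻¹ + δ) := by
    rw [mul_add, mul_inv_cancel₀ (hDpos n).ne']
    nlinarith
  gcongr
  exact hprod.trans (mul_le_mul_of_nonneg_left hnext (hDpos n).le)

theorem convergents_converge (hδ : 0 < δ)
    (hle : ∀ n, |backRatio lam (fun i => A (i + 1)) n| ≤ 1)
    (hgap : ∀ n, |backRatio lam (fun i => A (i + 1)) n| + δ ≤
      |A (n + 1) * lam - backRatio lam (fun i => A (i + 1)) n|) :
    (∀ n, cfQ lam A n ≠ 0) ∧
      ∃ x : ℝ, Tendsto (fun n => cfP lam A n / cfQ lam A n) atTop (𝓝 x) := by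
  have hQ : ∀ n, cfQ lam A n ≠ 0 := cfQ_ne_zero fun n =>
    abs_pos.mp ((add_pos_of_nonneg_of_pos (abs_nonneg _) hδ).trans_le (hgap n))
  refine ⟨hQ, cauchySeq_tendsto_of_complete (cauchySeq_of_summable_dist ?_)⟩
  simp only [dist_convergents hQ]
  refine Summable.abs (summable_of_ratio_norm_eventually_le (r := (1 + δ)⁻¹)
    (inv_lt_one_of_one_lt₀ (by linarith)) (.of_forall fun n => ?_))
  have hgrow := one_add_mul_abs_cfQ_le hδ hle hgap n
  have hn := abs_pos.mpr (hQ n)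
  have hn1 := abs_pos.mpr (hQ (n + 1))
  rw [Real.norm_eq_abs, Real.norm_eq_abs, abs_inv, abs_inv, abs_mul, abs_mul, ← mul_inv]
  gcongr ?_⁻¹
  nlinarith

end Convergents

section Barrier

/-- The digit sequence `a` stays lexicographically above the word `w 0, …, w (N - 1)`: whenever
the first `k ≤ N` letters of the word occur in `a` and are followed by a positive digit, the word is
not complete and this digit is at least the next letter. -/
def LexAbove (w : ℕ → ℤ) (N : ℕ) (a : ℕ → ℤ) : Prop :=
  ∀ l k, k ≤ N → (∀ i < k, a (l + i) = w i) → 0 < a (l + k) → k < N ∧ w k ≤ a (l + k)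

/-- A barrier with gap `δ` for the word `w 0, …, w (N - 1)`: `β k` is an upper bound for the
reversed ratios reached after the first `k` letters of the word, so `β` has to dominate the orbit of
`1 / (lam + 1)` under the maps `t ↦ 1 / (w k * lam - t)`, and `w k * lam - t` has to exceed `t` by
`δ` along the way. -/
structure IsBarrier (lam δ : ℝ) (w : ℕ → ℤ) (N : ℕ) (β : ℕ → ℝ) : Prop where
  gap_pos : 0 < δ
  gap_le : δ ≤ lam
  pos : ∀ k ≤ N, 0 < β k
  le_one : ∀ k ≤ N, β k ≤ 1
  init : (lam + 1)⁻¹ ≤ β 0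
  step : ∀ k < N, 1 ≤ β (k + 1) * (w k * lam - β k)
  add_gap_le : ∀ k < N, β k + δ ≤ w k * lam - β k

/-- The `n`-th reversed ratio of `a` respects the barrier `β`: for some `k ≤ N` the last `k` of the
first `n` digits are `w 0, …, w (k - 1)`, and the ratio is at most `β k`. -/
def BelowBarrier (lam : ℝ) (w : ℕ → ℤ) (N : ℕ) (β : ℕ → ℝ) (a : ℕ → ℤ) (n : ℕ) : Prop :=
  ∃ l k, n = l + k ∧ k ≤ N ∧ (∀ i < k, a (l + i) = w i) ∧ backRatio lam a n ≤ β k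

variable {lam δ : ℝ} {w : ℕ → ℤ} {N : ℕ} {β : ℕ → ℝ} {a : ℕ → ℤ} {n : ℕ}

theorem BelowBarrier.of_le_init (h : backRatio lam a n ≤ β 0) : BelowBarrier lam w N β a n :=
  ⟨n, 0, rfl, N.zero_le, fun _ hi => absurd hi (Nat.not_lt_zero _), h⟩

namespace IsBarrier

theorem backRatio_le_one (hβ : IsBarrier lam δ w N β) (h : BelowBarrier lam w N β a n) :
    backRatio lam a n ≤ 1 := by
  obtain ⟨l, k, -, hk, -, hle⟩ := h
  exact hle.trans (hβ.le_one k hk)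

theorem one_le_sub (hβ : IsBarrier lam δ w N β) {k : ℕ} (hk : k < N) : 1 ≤ w k * lam - β k := by
  have hstep := hβ.step k hk
  have hpos := hβ.pos (k + 1) hk
  have hle := hβ.le_one (k + 1) hk
  nlinarith

theorem belowBarrier_succ (hβ : IsBarrier lam δ w N β) (ha : LexAbove w N a)
    (h : BelowBarrier lam w N β a n) (han : 0 < a n) : BelowBarrier lam w N β a (n + 1) := by
  obtain ⟨l, k, rfl, hk, hword, hle⟩ := h
  obtain ⟨hkN, hwk⟩ := ha l k hk hword han
  have hone := hβ.one_le_sub hkN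
  have hlam : 0 ≤ lam := hβ.gap_pos.le.trans hβ.gap_le
  rcases hwk.eq_or_lt with heq | hlt
  · have hD : 0 < w k * lam - β k := by linarith
    have hanti : w k * lam - β k ≤ a (l + k) * lam - backRatio lam a (l + k) := by
      rw [← heq]; linarith
    refine ⟨l, k + 1, rfl, hkN, fun i hi => ?_, ?_⟩
    · rcases Nat.lt_succ_iff_lt_or_eq.mp hi with hi | rfl
      exacts [hword i hi, heq.symm]
    · calc backRatio lam a (l + k + 1) ≤ (w k * lam - β k)⁻¹ := inv_anti₀ hD hanti
        _ ≤ β (k + 1) := (inv_le_iff_one_le_mul₀ hD).mpr (hβ.step k hkN)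
  · have hlt' : (w k : ℝ) + 1 ≤ a (l + k) := by exact_mod_cast hlt
    have hD : lam + 1 ≤ a (l + k) * lam - backRatio lam a (l + k) := by nlinarith
    exact .of_le_init ((inv_anti₀ (by linarith) hD).trans hβ.init)

theorem abs_add_le_sub (hβ : IsBarrier lam δ w N β) (ha : LexAbove w N a)
    (h : BelowBarrier lam w N β a n) (han : 0 < a n) :
    |backRatio lam a n| + δ ≤ a n * lam - backRatio lam a n := by
  obtain ⟨l, k, rfl, hk, hword, hle⟩ := h
  obtain ⟨hkN, hwk⟩ := ha l k hk hword han
  have hgap := hβ.add_gap_le k hkN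
  have hδ := hβ.gap_pos
  have hδ' := hβ.gap_le
  have hwk' : (w k : ℝ) ≤ a (l + k) := by exact_mod_cast hwk
  have han' : (1 : ℝ) ≤ a (l + k) := by exact_mod_cast han
  rcases abs_cases (backRatio lam a (l + k)) with ⟨habs, -⟩ | ⟨habs, -⟩ <;> rw [habs] <;> nlinarith

theorem belowBarrier_neg_succ (hβ : IsBarrier lam δ w N β) (ha : LexAbove w N a)
    (h : BelowBarrier lam w N β a n) (han : 0 < a n) :
    BelowBarrier lam w N β (-a) (n + 1) := by
  have hD := (add_nonneg (abs_nonneg _) hβ.gap_pos.le).trans (hβ.abs_add_le_sub ha h han)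
  refine .of_le_init ?_
  rw [backRatio_neg, backRatio]
  exact (neg_nonpos.mpr (inv_nonneg.mpr hD)).trans (hβ.pos 0 N.zero_le).le

theorem belowBarrier (hβ : IsBarrier lam δ w N β) (hne : ∀ n, a n ≠ 0)
    (ha : LexAbove w N a) (ha' : LexAbove w N (-a)) (n : ℕ) :
    BelowBarrier lam w N β a n ∧ BelowBarrier lam w N β (-a) n := by
  induction n with
  | zero =>
    have h0 := (hβ.pos 0 N.zero_le).le
    exact ⟨.of_le_init h0, .of_le_init h0⟩
  | succ n ih =>
    rcases (hne n).lt_or_gt with hneg | hpos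
    · have hneg' : 0 < (-a) n := neg_pos.mpr hneg
      exact ⟨neg_neg a ▸ hβ.belowBarrier_neg_succ ha' ih.2 hneg',
        hβ.belowBarrier_succ ha' ih.2 hneg'⟩
    · exact ⟨hβ.belowBarrier_succ ha ih.1 hpos, hβ.belowBarrier_neg_succ ha ih.1 hpos⟩

theorem abs_backRatio_le_one (hβ : IsBarrier lam δ w N β) (hne : ∀ n, a n ≠ 0)
    (ha : LexAbove w N a) (ha' : LexAbove w N (-a)) (n : ℕ) :
    |backRatio lam a n| ≤ 1 := by
  obtain ⟨hbelow, hbelow'⟩ := hβ.belowBarrier hne ha ha' n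
  exact abs_le'.mpr ⟨hβ.backRatio_le_one hbelow, backRatio_neg a n ▸ hβ.backRatio_le_one hbelow'⟩

theorem abs_add_le_abs_sub (hβ : IsBarrier lam δ w N β) (hne : ∀ n, a n ≠ 0)
    (ha : LexAbove w N a) (ha' : LexAbove w N (-a)) (n : ℕ) :
    |backRatio lam a n| + δ ≤ |a n * lam - backRatio lam a n| := by
  obtain ⟨hbelow, hbelow'⟩ := hβ.belowBarrier hne ha ha' n
  rcases (hne n).lt_or_gt with hneg | hpos
  · have h := hβ.abs_add_le_sub ha' hbelow' (neg_pos.mpr hneg)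
    rw [backRatio_neg, abs_neg, Pi.neg_apply] at h
    push_cast at h
    linarith [neg_abs_le (a n * lam - backRatio lam a n)]
  · exact (hβ.abs_add_le_sub ha hbelow hpos).trans (le_abs_self _)

end IsBarrier

end Barrier

section CriticalWord

/-- The letters `1, …, 1, 2, 1, …` of the critical word, with the letter `2` at index `h_q`. -/
def criticalDigit (q i : ℕ) : ℤ := if i = hQ q then 2 else 1

/-- The length of the critical word of `q`, which is `1^h` for even `q` and `1^h 2 1^h` for odd
`q`, with `h = h_q`. -/
def criticalLength (q : ℕ) : ℕ := if Even q then hQ q else hQ q + 1 + hQ q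

variable {q : ℕ}

theorem IsForbidden.map_neg {L : List ℤ} (h : IsForbidden q L) : IsForbidden q (L.map (-·)) := by
  obtain ⟨ε, hε, hL⟩ := h
  refine ⟨-ε, by omega, hL.imp (fun hL => by simp [hL]) fun hL => ?_⟩
  split_ifs at hL ⊢ <;> obtain ⟨m, hm, rfl⟩ := hL <;> exact ⟨m, hm, by simp⟩

variable {a : ℕ → ℤ}

theorem ofFn_window_eq_replicate {l k : ℕ} {c : ℤ} (h : ∀ i < k, a (l + i) = c) :
    (List.ofFn fun j : Fin k => a (l + j)) = List.replicate k c := by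
  rw [← List.ofFn_const]
  exact congrArg List.ofFn (funext fun j => h j j.isLt)

theorem ofFn_window_add (l m n : ℕ) :
    (List.ofFn fun j : Fin (m + n) => a (l + j)) =
      (List.ofFn fun j : Fin m => a (l + j)) ++ List.ofFn fun j : Fin n => a (l + m + j) := by
  simp only [List.ofFn_add, Fin.val_castLE, Fin.val_natAdd, add_assoc]

namespace RegularSeq

theorem neg (ha : RegularSeq q a) : RegularSeq q (-a) := by
  intro l len h
  apply ha l len
  have h' := h.map_neg
  simpa only [List.map_ofFn, Function.comp_def, Pi.neg_apply, neg_neg] using h'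

theorem not_ones (ha : RegularSeq q a) (l : ℕ) : ¬∀ i < hQ q + 1, a (l + i) = 1 := fun h =>
  ha l _ ⟨1, .inl rfl, .inl (ofFn_window_eq_replicate h)⟩

theorem nonpos_of_even (hq : Even q) (ha : RegularSeq q a) {l : ℕ}
    (h : ∀ i < hQ q, a (l + i) = 1) : a (l + hQ q) ≤ 0 := by
  by_contra! hpos
  refine ha l (hQ q + 1) ⟨1, .inl rfl, .inr ?_⟩
  rw [if_pos hq]
  refine ⟨a (l + hQ q), hpos, ?_⟩
  rw [ofFn_window_add, ofFn_window_eq_replicate h]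
  simp

theorem nonpos_of_odd (hq : ¬Even q) (ha : RegularSeq q a) {l : ℕ}
    (h₁ : ∀ i < hQ q, a (l + i) = 1) (h₂ : a (l + hQ q) = 2)
    (h₃ : ∀ i < hQ q, a (l + hQ q + 1 + i) = 1) : a (l + hQ q + 1 + hQ q) ≤ 0 := by
  by_contra! hpos
  refine ha l (hQ q + (1 + (hQ q + 1))) ⟨1, .inl rfl, .inr ?_⟩
  rw [if_neg hq]
  refine ⟨a (l + hQ q + 1 + hQ q), hpos, ?_⟩
  rw [ofFn_window_add, ofFn_window_add, ofFn_window_add, ofFn_window_eq_replicate h₁,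
    ofFn_window_eq_replicate h₃]
  simp [h₂]

theorem nonpos_of_criticalWord (ha : RegularSeq q a) {l : ℕ}
    (h : ∀ i < criticalLength q, a (l + i) = criticalDigit q i) :
    a (l + criticalLength q) ≤ 0 := by
  unfold criticalLength criticalDigit at *
  split_ifs at h ⊢ with hq
  · exact ha.nonpos_of_even hq fun i hi => by rw [h i hi, if_neg hi.ne]
  · simp only [← add_assoc]
    refine ha.nonpos_of_odd hq (fun i hi => ?_) ?_ fun i hi => ?_
    · rw [h i (by omega), if_neg hi.ne]
    · rw [h _ (by omega), if_pos rfl]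
    · rw [add_assoc l, add_assoc l, h _ (by omega), if_neg (by omega)]

theorem criticalDigit_le (ha : RegularSeq q a) {l k : ℕ}
    (h : ∀ i < k, a (l + i) = criticalDigit q i) (hpos : 0 < a (l + k)) :
    criticalDigit q k ≤ a (l + k) := by
  unfold criticalDigit at *
  split_ifs with hk
  · by_contra! hlt
    refine ha.not_ones l fun i hi => ?_
    rcases Nat.lt_succ_iff_lt_or_eq.mp hi with hi | rfl
    · rw [h i (hk ▸ hi), if_neg hi.ne]
    · rw [← hk]; omega
  · exact hpos

theorem lexAbove (ha : RegularSeq q a) : LexAbove (criticalDigit q) (criticalLength q) a := by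
  intro l k hk h hpos
  refine ⟨hk.lt_of_ne fun hkN => ?_, ha.criticalDigit_le h hpos⟩
  subst hkN
  exact hpos.not_ge (ha.nonpos_of_criticalWord h)

end RegularSeq

end CriticalWord

section SinRatio

open Real

/-- The ratio `sin x / sin (x + θ)`. In the phase `x`, the map `t ↦ 1 / (2 cos θ - t)` is the
translation by `θ`. -/
noncomputable def sinRatio (θ x : ℝ) : ℝ := sin x / sin (x + θ)

variable {θ x : ℝ}

theorem sinRatio_pos (hθ : 0 < θ) (hx : 0 < x) (h : x + θ < π) : 0 < sinRatio θ x :=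
  div_pos (sin_pos_of_pos_of_lt_pi hx (by linarith))
    (sin_pos_of_pos_of_lt_pi (by linarith) h)

theorem sinRatio_le_one (hθ : 0 < θ) (hx : 0 < x) (h : 2 * x + θ ≤ π) : sinRatio θ x ≤ 1 := by
  refine div_le_one_of_le₀ ?_ (sin_nonneg_of_nonneg_of_le_pi (by linarith) (by linarith))
  have hcos : 0 ≤ cos (x + θ / 2) := cos_nonneg_of_neg_pi_div_two_le_of_le (by linarith)
    (by linarith)
  have hsin : 0 ≤ sin (θ / 2) := sin_nonneg_of_nonneg_of_le_pi (by linarith) (by linarith)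
  have hdiff : sin (x + θ) - sin x = 2 * sin (θ / 2) * cos (x + θ / 2) := by
    rw [sin_sub_sin]
    ring_nf
  nlinarith [mul_nonneg hsin hcos]

theorem sinRatio_add_mul_sub (h₁ : sin (x + θ) ≠ 0) (h₂ : sin (x + θ + θ) ≠ 0) :
    sinRatio θ (x + θ) * (2 * cos θ - sinRatio θ x) = 1 := by
  have hrec : sin (x + θ + θ) = 2 * cos θ * sin (x + θ) - sin x := by
    rw [sin_add (x + θ) θ, cos_add, sin_add]
    linear_combination -sin x * sin_sq_add_cos_sq θ
  unfold sinRatio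
  field_simp
  linear_combination -hrec

theorem sinRatio_self (h : sin θ ≠ 0) : sinRatio θ θ = (2 * cos θ)⁻¹ := by
  rw [sinRatio, ← two_mul, sin_two_mul, mul_right_comm, div_mul_cancel_right₀ h]

theorem sinRatio_half (h : sin (θ / 2) ≠ 0) : sinRatio θ (θ / 2) = (2 * cos θ + 1)⁻¹ := by
  have htriple : sin (θ / 2 + θ) = (2 * cos θ + 1) * sin (θ / 2) := by
    have hθ : θ = 2 * (θ / 2) := by ring
    rw [show θ / 2 + θ = 3 * (θ / 2) by ring, sin_three_mul, hθ, cos_two_mul, ← hθ]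
    linear_combination -4 * sin (θ / 2) * sin_sq_add_cos_sq (θ / 2)
  rw [sinRatio, htriple, div_mul_cancel_right₀ h]

theorem sinRatio_pi_div_two_sub : sinRatio θ (π / 2 - θ) = cos θ := by
  rw [sinRatio, sub_add_cancel, sin_pi_div_two, div_one, sin_pi_div_two_sub]

theorem sinRatio_add_mul_sub_of_le (hθ : 0 < θ) (hx : 0 < x) (h : 2 * (x + θ) + θ ≤ π) :
    sinRatio θ (x + θ) * (2 * cos θ - sinRatio θ x) = 1 :=
  sinRatio_add_mul_sub (sin_pos_of_pos_of_lt_pi (by linarith) (by linarith)).ne'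
    (sin_pos_of_pos_of_lt_pi (by linarith) (by linarith)).ne'

theorem sinRatio_le_sub_one (hθ : 0 < θ) (hx : 0 < x) (h : 2 * (x + θ) + θ ≤ π) :
    sinRatio θ x ≤ 2 * cos θ - 1 := by
  have hstep := sinRatio_add_mul_sub_of_le hθ hx h
  have hpos : 0 < sinRatio θ (x + θ) := sinRatio_pos hθ (by linarith) (by linarith)
  have hle : sinRatio θ (x + θ) ≤ 1 := sinRatio_le_one hθ (by linarith) h
  nlinarith

end SinRatio

section CriticalBarrier

/-- The phase, in units of `π / q`, of the barrier after `k` letters of the critical word: it starts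
at `1 / 2` and is reset to `1` by the letter `2`. -/
noncomputable def criticalPhase (q k : ℕ) : ℝ := if k ≤ hQ q then k + 1 / 2 else k - hQ q

/-- The barrier for the critical word of `q`. -/
noncomputable def criticalBarrier (q k : ℕ) : ℝ :=
  sinRatio (Real.pi / q) (criticalPhase q k * (Real.pi / q))

variable {q k : ℕ}

theorem one_le_lamq (hq : 3 ≤ q) : 1 ≤ lamq q := by
  have hle : Real.pi / q ≤ Real.pi / 3 := by gcongr; exact_mod_cast hq
  have hcos := Real.cos_le_cos_of_nonneg_of_le_pi (by positivity)
    (by linarith [Real.pi_pos]) hle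
  rw [Real.cos_pi_div_three] at hcos
  unfold lamq
  linarith

theorem lamq_lt_two (hq : 1 ≤ q) : lamq q < 2 := by
  have hpos : 0 < Real.pi / q := by positivity
  have hle : Real.pi / q ≤ Real.pi := div_le_self Real.pi_pos.le (by exact_mod_cast hq)
  have hcos := Real.cos_lt_cos_of_nonneg_of_le_pi le_rfl hle hpos
  rw [Real.cos_zero] at hcos
  unfold lamq
  linarith

theorem two_mul_hQ_add_two (hq : 3 ≤ q) (he : Even q) : 2 * hQ q + 2 = q := by
  rw [hQ, if_pos he]
  grind

theorem two_mul_hQ_add_three (hq : 3 ≤ q) (ho : ¬Even q) : 2 * hQ q + 3 = q := by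
  rw [hQ, if_neg ho]
  grind

theorem not_even_of_hQ_lt (h : hQ q < criticalLength q) : ¬Even q := fun he =>
  h.ne (if_pos he).symm

theorem criticalPhase_pos (q k : ℕ) : 0 < criticalPhase q k := by
  unfold criticalPhase
  split_ifs with h
  · positivity
  · exact sub_pos.mpr (by exact_mod_cast not_le.mp h)

theorem criticalPhase_succ (hk : k ≠ hQ q) : criticalPhase q (k + 1) = criticalPhase q k + 1 := by
  unfold criticalPhase
  split_ifs <;> first | omega | (push_cast; ring)

theorem two_mul_criticalPhase_add_one_le (hq : 3 ≤ q) (hk : k ≤ criticalLength q) :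
    2 * criticalPhase q k + 1 ≤ q := by
  have hnat : if k ≤ hQ q then 2 * k + 2 ≤ q else 2 * k + 1 ≤ q + 2 * hQ q := by
    unfold criticalLength at hk
    by_cases he : Even q
    · have := two_mul_hQ_add_two hq he
      grind
    · have := two_mul_hQ_add_three hq he
      grind
  unfold criticalPhase
  split_ifs at hnat ⊢
  all_goals
    rify at hnat
    linarith

theorem two_mul_criticalPhase_mul_add_le (hq : 3 ≤ q) (hk : k ≤ criticalLength q) :
    2 * (criticalPhase q k * (Real.pi / q)) + Real.pi / q ≤ Real.pi := by
  have hq0 : (0 : ℝ) < q := by exact_mod_cast (by omega : 0 < q)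
  calc 2 * (criticalPhase q k * (Real.pi / q)) + Real.pi / q
      = (2 * criticalPhase q k + 1) * (Real.pi / q) := by ring
    _ ≤ q * (Real.pi / q) := by gcongr; exact two_mul_criticalPhase_add_one_le hq hk
    _ = Real.pi := mul_div_cancel₀ _ hq0.ne'

theorem criticalPhase_mul_pos (hq : 1 ≤ q) (k : ℕ) : 0 < criticalPhase q k * (Real.pi / q) :=
  mul_pos (criticalPhase_pos q k) (by positivity)

theorem criticalPhase_mul_succ (hk : k ≠ hQ q) :
    criticalPhase q (k + 1) * (Real.pi / q) =
      criticalPhase q k * (Real.pi / q) + Real.pi / q := by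
  rw [criticalPhase_succ hk, add_one_mul]

theorem criticalBarrier_pos (hq : 3 ≤ q) (hk : k ≤ criticalLength q) : 0 < criticalBarrier q k := by
  have hx := criticalPhase_mul_pos (by omega : 1 ≤ q) k
  have hle := two_mul_criticalPhase_mul_add_le hq hk
  exact sinRatio_pos (by positivity) hx (by linarith)

theorem criticalBarrier_le_one (hq : 3 ≤ q) (hk : k ≤ criticalLength q) :
    criticalBarrier q k ≤ 1 :=
  sinRatio_le_one (by positivity) (criticalPhase_mul_pos (by omega) k)
    (two_mul_criticalPhase_mul_add_le hq hk)

theorem criticalBarrier_zero (hq : 3 ≤ q) : criticalBarrier q 0 = (lamq q + 1)⁻¹ := by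
  have hphase : criticalPhase q 0 * (Real.pi / q) = Real.pi / q / 2 := by
    rw [criticalPhase, if_pos (Nat.zero_le _)]
    push_cast
    ring
  have hle : Real.pi / q ≤ Real.pi := div_le_self Real.pi_pos.le (by exact_mod_cast (by omega))
  have hsin : 0 < Real.sin (Real.pi / q / 2) :=
    Real.sin_pos_of_pos_of_lt_pi (by positivity) (by linarith [Real.pi_pos])
  rw [criticalBarrier, hphase, sinRatio_half hsin.ne', lamq]

theorem criticalBarrier_succ_mul_sub (hq : 3 ≤ q) (hk : k < criticalLength q) (hne : k ≠ hQ q) :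
    criticalBarrier q (k + 1) * (lamq q - criticalBarrier q k) = 1 := by
  have hle := two_mul_criticalPhase_mul_add_le hq (Nat.succ_le_of_lt hk)
  rw [criticalPhase_mul_succ hne] at hle
  rw [criticalBarrier, criticalPhase_mul_succ hne]
  exact sinRatio_add_mul_sub_of_le (by positivity) (criticalPhase_mul_pos (by omega) k) hle

theorem criticalBarrier_le_sub_one (hq : 3 ≤ q) (hk : k < criticalLength q) (hne : k ≠ hQ q) :
    criticalBarrier q k ≤ lamq q - 1 := by
  have hle := two_mul_criticalPhase_mul_add_le hq (Nat.succ_le_of_lt hk)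
  rw [criticalPhase_mul_succ hne] at hle
  exact sinRatio_le_sub_one (by positivity) (criticalPhase_mul_pos (by omega) k) hle

theorem criticalBarrier_hQ (hq : 3 ≤ q) (ho : ¬Even q) :
    criticalBarrier q (hQ q) = lamq q / 2 := by
  have hq' : (q : ℝ) = 2 * hQ q + 3 := by exact_mod_cast (two_mul_hQ_add_three hq ho).symm
  have hphase : criticalPhase q (hQ q) * (Real.pi / q) = Real.pi / 2 - Real.pi / q := by
    rw [criticalPhase, if_pos le_rfl, hq']
    field_simp
    ring
  rw [criticalBarrier, hphase, sinRatio_pi_div_two_sub, lamq, mul_div_cancel_left₀ _ two_ne_zero]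

theorem criticalBarrier_hQ_succ (hq : 2 ≤ q) : criticalBarrier q (hQ q + 1) = (lamq q)⁻¹ := by
  have hphase : criticalPhase q (hQ q + 1) = 1 := by
    rw [criticalPhase, if_neg (by omega)]
    push_cast
    ring
  have hlt : Real.pi / q < Real.pi := div_lt_self Real.pi_pos (by exact_mod_cast hq)
  have hsin : 0 < Real.sin (Real.pi / q) := Real.sin_pos_of_pos_of_lt_pi (by positivity) hlt
  rw [criticalBarrier, hphase, one_mul, sinRatio_self hsin.ne', lamq]

theorem isBarrier_criticalBarrier (hq : 3 ≤ q) :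
    IsBarrier (lamq q) (2 - lamq q) (criticalDigit q) (criticalLength q) (criticalBarrier q) where
  gap_pos := sub_pos.mpr (lamq_lt_two (by omega))
  gap_le := by linarith [one_le_lamq hq]
  pos _ := criticalBarrier_pos hq
  le_one _ := criticalBarrier_le_one hq
  init := (criticalBarrier_zero hq).ge
  step k hk := by
    rcases eq_or_ne k (hQ q) with rfl | hne
    · have hlam := one_le_lamq hq
      rw [criticalBarrier_hQ hq (not_even_of_hQ_lt hk), criticalBarrier_hQ_succ (by omega),
        criticalDigit, if_pos rfl, inv_mul_eq_div, le_div_iff₀ (by linarith)]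
      push_cast
      linarith
    · rw [criticalDigit, if_neg hne, Int.cast_one, one_mul, criticalBarrier_succ_mul_sub hq hk hne]
  add_gap_le k hk := by
    have hlam := one_le_lamq hq
    rcases eq_or_ne k (hQ q) with rfl | hne
    · rw [criticalBarrier_hQ hq (not_even_of_hQ_lt hk), criticalDigit, if_pos rfl]
      push_cast
      linarith
    · have hle := criticalBarrier_le_sub_one hq hk hne
      rw [criticalDigit, if_neg hne]
      push_cast
      linarith

end CriticalBarrier

/-- Every regular `λ_q`-CF converges: the denominators `q_n` never vanish and the
convergents `p_n/q_n` converge in `ℝ`. -/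
theorem stmt1 (q : ℕ) (hq : 3 ≤ q) (A : ℕ → ℤ)
    (hnz : ∀ i, A (i + 1) ≠ 0) (hreg : RegularSeq q (fun i => A (i + 1))) :
    (∀ n, cfQ (lamq q) A n ≠ 0) ∧
      ∃ x : ℝ, Filter.Tendsto (fun n => cfP (lamq q) A n / cfQ (lamq q) A n)
        Filter.atTop (nhds x) := by
  have hβ := isBarrier_criticalBarrier hq
  exact convergents_converge hβ.gap_pos
    (hβ.abs_backRatio_le_one hnz hreg.lexAbove hreg.neg.lexAbove)
    (hβ.abs_add_le_abs_sub hnz hreg.lexAbove hreg.neg.lexAbove)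
end

section
/- Let q ≥ 3 and let x = [a_0; a_1, a_2, …] and y = [b_0; b_1, b_2, …] be values of infinite regular λ_q-CFs whose digit sequences are not identical, and let n be the least index with a_n ≠ b_n. Then x < y if and only if one of the following holds: (i) n = 0 and a_0 < b_0; (ii) n ≥ 1, a_n·b_n < 0 and a_n > 0; (iii) n ≥ 1, a_n·b_n > 0 and a_n < b_n. -/
open Filter Topology

/-!
The digits of a regular sequence are controlled by the finite expansion
`-λ/2 = [0; w₀, …, w_{L-1}]`, where `w = 1^h` for even `q` and `w = 1^h 2 1^h` for odd `q`.
Its tails are `-d_{j+1}/d_j` with `d₀ = 2`, `d₁ = λ` and `d_{j+2} = w_j λ d_{j+1} - d_j`; the `d_j`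
are explicit multiples of cosines, positive up to the end of the word. Order digits by the value of
`-1/(bλ + t)`: negative digits come above positive ones, and larger digits of the same sign above
smaller ones. Regularity of `a` says that no tail of `a` or `-a` falls below `w` in this order, and
since `w` is finite this puts every tail of the continued fraction strictly inside `(-λ/2, λ/2)`.
Hence every digit is the nearest one, so the first differing digit decides the order at its own
position, and going back one digit applies the same branch of `z ↦ aλ - 1/z` to both sides.
-/

section Order

variable {K : Type*} [Field K] [LinearOrder K] [IsStrictOrderedRing K]

/-- `X` is the sequence of complete quotients of the `λ`-continued fraction with digits `A`, and
every digit is the nearest one: `A k * λ` is at distance less than `λ / 2` from `X k`. -/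
structure IsNearestExpansion (lam : K) (A : ℕ → ℤ) (X : ℕ → K) : Prop where
  abs_sub_lt : ∀ k, |X k - A k * lam| < lam / 2
  eq_sub_inv : ∀ k, X k = A k * lam - (X (k + 1))⁻¹

variable {lam x y : K} {a b : ℤ}

theorem lt_of_abs_sub_mul_lt (hx : |x - a * lam| < lam / 2) (hy : |y - b * lam| < lam / 2)
    (hab : a < b) : x < y := by
  have hlam : 0 < lam := by linarith [abs_nonneg (x - a * lam)]
  have hab' : (a : K) + 1 ≤ b := by exact_mod_cast hab
  have hmul : ((a : K) + 1) * lam ≤ b * lam := by gcongr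
  linarith [(abs_lt.mp hx).2, (abs_lt.mp hy).1]

theorem lt_iff_of_abs_sub_mul_lt (hx : |x - a * lam| < lam / 2) (hy : |y - b * lam| < lam / 2)
    (hab : a ≠ b) : x < y ↔ a < b :=
  ⟨fun hxy => hab.lt_or_gt.resolve_right fun hba =>
    hxy.not_gt (lt_of_abs_sub_mul_lt hy hx hba), lt_of_abs_sub_mul_lt hx hy⟩

theorem pos_of_abs_sub_mul_lt (hx : |x - a * lam| < lam / 2) (ha : 0 < a) : 0 < x := by
  have hlam : 0 < lam := by linarith [abs_nonneg (x - a * lam)]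
  exact lt_of_abs_sub_mul_lt (a := 0) (by simpa using hlam) hx ha

theorem neg_of_abs_sub_mul_lt (hx : |x - a * lam| < lam / 2) (ha : a < 0) : x < 0 := by
  have hlam : 0 < lam := by linarith [abs_nonneg (x - a * lam)]
  exact lt_of_abs_sub_mul_lt (b := 0) hx (by simpa using hlam) ha

theorem inv_lt_inv_iff_of_abs_sub_mul_lt (hx : |x - a * lam| < lam / 2)
    (hy : |y - b * lam| < lam / 2) (ha : a ≠ 0) (hb : b ≠ 0) (hab : a ≠ b) :
    y⁻¹ < x⁻¹ ↔ (a * b < 0 ∧ 0 < a) ∨ (0 < a * b ∧ a < b) := by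
  rcases ha.lt_or_gt with ha | ha <;> rcases hb.lt_or_gt with hb | hb
  · rw [inv_lt_inv_of_neg (neg_of_abs_sub_mul_lt hy hb) (neg_of_abs_sub_mul_lt hx ha),
      lt_iff_of_abs_sub_mul_lt hx hy hab]
    simp [ha.not_gt, mul_pos_of_neg_of_neg ha hb]
  · have hlt : x⁻¹ < y⁻¹ := (inv_lt_zero.mpr (neg_of_abs_sub_mul_lt hx ha)).trans
      (inv_pos.mpr (pos_of_abs_sub_mul_lt hy hb))
    simp [hlt.not_gt, ha.not_gt, (mul_neg_of_neg_of_pos ha hb).not_gt]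
  · have hlt : y⁻¹ < x⁻¹ := (inv_lt_zero.mpr (neg_of_abs_sub_mul_lt hy hb)).trans
      (inv_pos.mpr (pos_of_abs_sub_mul_lt hx ha))
    simp [hlt, ha, mul_neg_of_pos_of_neg ha hb]
  · rw [inv_lt_inv₀ (pos_of_abs_sub_mul_lt hy hb) (pos_of_abs_sub_mul_lt hx ha),
      lt_iff_of_abs_sub_mul_lt hx hy hab]
    simp [(mul_pos ha hb).not_gt, mul_pos ha hb]

theorem inv_lt_inv_iff_lt_of_abs_sub_mul_lt (hx : |x - a * lam| < lam / 2)
    (hy : |y - a * lam| < lam / 2) (ha : a ≠ 0) : y⁻¹ < x⁻¹ ↔ x < y := by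
  rcases ha.lt_or_gt with ha | ha
  · exact inv_lt_inv_of_neg (neg_of_abs_sub_mul_lt hy ha) (neg_of_abs_sub_mul_lt hx ha)
  · exact inv_lt_inv₀ (pos_of_abs_sub_mul_lt hy ha) (pos_of_abs_sub_mul_lt hx ha)

namespace IsNearestExpansion

variable {A B : ℕ → ℤ} {X Y : ℕ → K}

theorem lt_iff_inv_lt_inv (hX : IsNearestExpansion lam A X) (hY : IsNearestExpansion lam B Y)
    {k : ℕ} (hk : A k = B k) : X k < Y k ↔ (Y (k + 1))⁻¹ < (X (k + 1))⁻¹ := by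
  rw [hX.eq_sub_inv k, hY.eq_sub_inv k, hk, sub_lt_sub_iff_left]

theorem lt_iff_of_digits_eq (hX : IsNearestExpansion lam A X) (hY : IsNearestExpansion lam B Y)
    (hA : ∀ i, A (i + 1) ≠ 0) {n : ℕ} (hAB : ∀ m ≤ n, A m = B m) :
    X 0 < Y 0 ↔ X n < Y n := by
  induction n with
  | zero => rfl
  | succ n ih =>
    rw [ih fun m hm => hAB m (by omega), hX.lt_iff_inv_lt_inv hY (hAB n (by omega))]
    exact inv_lt_inv_iff_lt_of_abs_sub_mul_lt (hX.abs_sub_lt _)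
      (hAB (n + 1) le_rfl ▸ hY.abs_sub_lt (n + 1)) (hA n)

theorem lt_iff_of_first_digit_ne (hX : IsNearestExpansion lam A X) (hY : IsNearestExpansion lam B Y)
    (hA : ∀ i, A (i + 1) ≠ 0) (hB : ∀ i, B (i + 1) ≠ 0)
    {n : ℕ} (hne : A n ≠ B n) (hmin : ∀ m < n, A m = B m) :
    X 0 < Y 0 ↔
      ((n = 0 ∧ A 0 < B 0) ∨
        (1 ≤ n ∧ A n * B n < 0 ∧ 0 < A n) ∨
        (1 ≤ n ∧ 0 < A n * B n ∧ A n < B n)) := by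
  rcases n with _ | n
  · simpa using lt_iff_of_abs_sub_mul_lt (hX.abs_sub_lt 0) (hY.abs_sub_lt 0) hne
  · rw [hX.lt_iff_of_digits_eq hY hA fun m hm => hmin m (Nat.lt_succ_of_le hm),
      hX.lt_iff_inv_lt_inv hY (hmin n (by omega)),
      inv_lt_inv_iff_of_abs_sub_mul_lt (hX.abs_sub_lt _) (hY.abs_sub_lt _) (hA n) (hB n) hne]
    simp

end IsNearestExpansion

end Order

section FiniteTails

variable {K : Type*} [Field K]

/-- The value of the finite continued fraction `[0; a k, …, a (k + n - 1)]`. -/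
def cfTail (lam : K) (a : ℕ → ℤ) : ℕ → ℕ → K
  | 0, _ => 0
  | n + 1, k => -(a k * lam + cfTail lam a n (k + 1))⁻¹

theorem cfTail_neg (lam : K) (a : ℕ → ℤ) (n k : ℕ) :
    cfTail lam (-a) n k = -cfTail lam a n k := by
  induction n generalizing k with
  | zero => simp only [cfTail, neg_zero]
  | succ n ih =>
    simp only [cfTail, ih, Pi.neg_apply, Int.cast_neg, neg_mul, ← neg_add, inv_neg]

theorem cfTail_comp_succ (lam : K) (a : ℕ → ℤ) (n k : ℕ) :
    cfTail lam (fun i => a (i + 1)) n k = cfTail lam a n (k + 1) := by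
  induction n generalizing k with
  | zero => rfl
  | succ n ih => simp only [cfTail, ih]

theorem cfQ_succ (lam : ℝ) (A : ℕ → ℤ) (n : ℕ) :
    cfQ lam A (n + 1) = cfP lam (fun i => A (i + 1)) n := by
  induction n using Nat.twoStepInduction with
  | zero => rfl
  | one => simp only [cfQ, cfP]
  | more n ih₀ ih₁ => rw [cfQ, ih₀, ih₁, cfP]

theorem cfP_succ (lam : ℝ) (A : ℕ → ℤ) (n : ℕ) :
    cfP lam A (n + 1) =
      A 0 * lam * cfP lam (fun i => A (i + 1)) n - cfQ lam (fun i => A (i + 1)) n := by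
  induction n using Nat.twoStepInduction with
  | zero => simp only [cfP, cfQ, zero_add]; ring
  | one => simp only [cfP, cfQ, zero_add, Nat.reduceAdd]; ring
  | more n ih₀ ih₁ => rw [cfP, ih₀, ih₁, cfP, cfQ]; ring

theorem cfP_div_cfQ_eq_add_cfTail {lam : ℝ} {A : ℕ → ℤ}
    (hden : ∀ m k, A (k + 1) * lam + cfTail lam (fun i => A (i + 1)) m (k + 1) ≠ 0) (n : ℕ) :
    cfP lam A n / cfQ lam A n = A 0 * lam + cfTail lam (fun i => A (i + 1)) n 0 := by
  induction n generalizing A with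
  | zero => simp only [cfP, cfQ, cfTail, div_one, add_zero]
  | succ n ih =>
    have hshift := ih (A := fun i => A (i + 1)) fun m k => by
      rw [cfTail_comp_succ lam fun i => A (i + 1)]
      exact hden m (k + 1)
    rw [cfTail_comp_succ lam fun i => A (i + 1)] at hshift
    have hP : cfP lam (fun i => A (i + 1)) n ≠ 0 := by
      intro h
      rw [h, zero_div] at hshift
      exact hden n 0 hshift.symm
    rw [cfP_succ, cfQ_succ, cfTail, ← hshift, inv_div, sub_div, mul_div_cancel_right₀ _ hP,
      sub_eq_add_neg]

end FiniteTails

section InfiniteTails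

theorem ne_zero_of_tendsto_inv {ι 𝕜 : Type*} [NormedField 𝕜] {l : Filter ι} [l.NeBot]
    {u : ι → 𝕜} {t : 𝕜} {M : ℝ} (hu : ∀ n, u n ≠ 0) (hM : ∀ n, ‖u n‖ ≤ M)
    (ht : Tendsto (fun n => (u n)⁻¹) l (𝓝 t)) : t ≠ 0 := by
  have hone : ∀ n, 1 ≤ ‖(u n)⁻¹‖ * M := fun n => calc
    (1 : ℝ) = ‖(u n)⁻¹‖ * ‖u n‖ := by rw [← norm_mul, inv_mul_cancel₀ (hu n), norm_one]
    _ ≤ ‖(u n)⁻¹‖ * M := by gcongr; exact hM n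
  have hlim : 1 ≤ ‖t‖ * M := ge_of_tendsto' (ht.norm.mul_const M) hone
  rintro rfl
  norm_num at hlim

variable {lam M : ℝ} {a : ℕ → ℤ}

theorem tendsto_cfTail_succ {k : ℕ} {t : ℝ} (hM : ∀ n k, |cfTail lam a n k| ≤ M)
    (hden : ∀ n k, a k * lam + cfTail lam a n (k + 1) ≠ 0)
    (ht : Tendsto (fun n => cfTail lam a n k) atTop (𝓝 t)) :
    ∃ t', Tendsto (fun n => cfTail lam a n (k + 1)) atTop (𝓝 t') ∧ t = -(a k * lam + t')⁻¹ := by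
  have hinv : Tendsto (fun n => (a k * lam + cfTail lam a n (k + 1))⁻¹) atTop (𝓝 (-t)) := by
    simpa only [Function.comp_def, cfTail, neg_neg] using (ht.comp (tendsto_add_atTop_nat 1)).neg
  have hbound : ∀ n, ‖a k * lam + cfTail lam a n (k + 1)‖ ≤ |a k * lam| + M := fun n =>
    (abs_add_le _ _).trans (by gcongr; exact hM n (k + 1))
  have ht0 : -t ≠ 0 := ne_zero_of_tendsto_inv (fun n => hden n k) hbound hinv
  refine ⟨(-t)⁻¹ - a k * lam, ?_, by rw [add_sub_cancel, inv_inv, neg_neg]⟩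
  simpa only [inv_inv, add_sub_cancel_left] using (hinv.inv₀ ht0).sub_const (a k * lam)

theorem exists_tendsto_cfTail {t : ℝ} (hM : ∀ n k, |cfTail lam a n k| ≤ M)
    (hden : ∀ n k, a k * lam + cfTail lam a n (k + 1) ≠ 0)
    (ht : Tendsto (fun n => cfTail lam a n 0) atTop (𝓝 t)) :
    ∃ τ : ℕ → ℝ, τ 0 = t ∧ (∀ k, |τ k| ≤ M) ∧ ∀ k, τ k = -(a k * lam + τ (k + 1))⁻¹ := by
  have hlim : ∀ k, ∃ s, Tendsto (fun n => cfTail lam a n k) atTop (𝓝 s) := by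
    intro k
    induction k with
    | zero => exact ⟨t, ht⟩
    | succ k ih =>
      obtain ⟨s, hs⟩ := ih
      obtain ⟨s', hs', -⟩ := tendsto_cfTail_succ hM hden hs
      exact ⟨s', hs'⟩
  choose τ hτ using hlim
  refine ⟨τ, tendsto_nhds_unique (hτ 0) ht,
    fun k => le_of_tendsto' (hτ k).abs fun n => hM n k, fun k => ?_⟩
  obtain ⟨s', hs', hrec⟩ := tendsto_cfTail_succ hM hden (hτ k)
  rwa [tendsto_nhds_unique (hτ (k + 1)) hs']

end InfiniteTails

section Boundary

variable {K : Type*} [Field K]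

/-- The numbers `d_j` for which `-d_{j+1} / d_j` is the `j`-th tail of the expansion of `-λ/2`
with digits `w`. -/
def boundaryDen (lam : K) (w : ℕ → ℤ) : ℕ → K
  | 0 => 2
  | 1 => lam
  | j + 2 => w j * lam * boundaryDen lam w (j + 1) - boundaryDen lam w j

/-- The linear form in `t` that, for `d_j > 0`, is positive exactly when `t` lies above the
`j`-th tail `-d_{j+1} / d_j` of the expansion of `-λ/2`. -/
def boundaryGap (lam : K) (w : ℕ → ℤ) (j : ℕ) (t : K) : K :=
  boundaryDen lam w (j + 1) + boundaryDen lam w j * t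

theorem boundaryGap_neg_inv {lam : K} {w : ℕ → ℤ} {j : ℕ} {b : ℤ} {t : K}
    (h : b * lam + t ≠ 0) :
    boundaryGap lam w j (-(b * lam + t)⁻¹) = (b * lam + t)⁻¹ *
      (boundaryGap lam w (j + 1) t + (b - w j) * lam * boundaryDen lam w (j + 1)) := by
  simp only [boundaryGap, boundaryDen]
  field_simp
  ring

variable [LinearOrder K]

/-- The first `L` digits of `w` expand `-λ/2` with nonpositive tails. The expansion ends at `0`
when the last inequality is an equality. -/
structure IsBoundaryWord (lam : K) (w : ℕ → ℤ) (L : ℕ) : Prop where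
  lam_pos : 0 < lam
  den_pos : ∀ j ≤ L, 0 < boundaryDen lam w j
  den_last_nonneg : 0 ≤ boundaryDen lam w (L + 1)

/-- No tail of `a` falls below `w₀ … w_{L-1}` in the order of the values `-1 / (bλ + t)`, in which
negative digits `b` come above positive ones and larger digits of the same sign above smaller ones.
A tail that begins with all of `w` has to continue with a negative digit. -/
def StaysAbove (w : ℕ → ℤ) (L : ℕ) (a : ℕ → ℤ) : Prop :=
  ∀ k, ∀ j ≤ L, (∀ i < j, a (k + i) = w i) → a (k + j) < 0 ∨ j < L ∧ w j ≤ a (k + j)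

theorem IsBoundaryWord.den_succ_nonneg {lam : K} {w : ℕ → ℤ} {L j : ℕ}
    (hw : IsBoundaryWord lam w L) (hj : j ≤ L) : 0 ≤ boundaryDen lam w (j + 1) := by
  rcases hj.eq_or_lt with rfl | hj
  · exact hw.den_last_nonneg
  · exact (hw.den_pos _ hj).le

variable [IsStrictOrderedRing K] {lam t : K} {b : ℤ}

theorem mul_add_pos_of_abs_le (hlam : 0 < lam) (hb : 0 < b) (ht : |t| ≤ lam / 2) :
    0 < b * lam + t := by
  have hb' : (1 : K) ≤ b := by exact_mod_cast hb
  linarith [le_mul_of_one_le_left hlam.le hb', (abs_le.mp ht).1]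

theorem mul_add_neg_of_abs_le (hlam : 0 < lam) (hb : b < 0) (ht : |t| ≤ lam / 2) :
    b * lam + t < 0 := by
  have h := mul_add_pos_of_abs_le hlam (neg_pos.mpr hb) ((abs_neg t).trans_le ht)
  push_cast at h
  linarith

theorem mul_add_ne_zero_of_abs_le (hlam : 0 < lam) (hb : b ≠ 0) (ht : |t| ≤ lam / 2) :
    b * lam + t ≠ 0 :=
  hb.lt_or_gt.elim (fun h => (mul_add_neg_of_abs_le hlam h ht).ne)
    fun h => (mul_add_pos_of_abs_le hlam h ht).ne'

theorem abs_le_iff_boundaryGap_zero_nonneg {w : ℕ → ℤ} :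
    |t| ≤ lam / 2 ↔ 0 ≤ boundaryGap lam w 0 t ∧ 0 ≤ boundaryGap lam w 0 (-t) := by
  simp only [boundaryGap, boundaryDen, abs_le]
  constructor <;> rintro ⟨h₁, h₂⟩ <;> constructor <;> linarith

theorem abs_lt_iff_boundaryGap_zero_pos {w : ℕ → ℤ} :
    |t| < lam / 2 ↔ 0 < boundaryGap lam w 0 t ∧ 0 < boundaryGap lam w 0 (-t) := by
  simp only [boundaryGap, boundaryDen, abs_lt]
  constructor <;> rintro ⟨h₁, h₂⟩ <;> constructor <;> linarith

namespace IsBoundaryWord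

variable {w a : ℕ → ℤ} {L k j : ℕ}

theorem digit_pos (hw : IsBoundaryWord lam w L) (hj : j < L) : 0 < w j := by
  have hrec : 0 ≤ w j * lam * boundaryDen lam w (j + 1) - boundaryDen lam w j :=
    hw.den_succ_nonneg (j := j + 1) hj
  have hmul : 0 < w j * lam * boundaryDen lam w (j + 1) := by
    linarith [hw.den_pos j hj.le]
  have hcast : (0 : K) < w j :=
    pos_of_mul_pos_left (pos_of_mul_pos_left hmul (hw.den_pos _ hj).le) hw.lam_pos.le
  exact_mod_cast hcast

theorem boundaryGap_pos_of_neg (hw : IsBoundaryWord lam w L) (hj : j ≤ L) (ht : |t| ≤ lam / 2)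
    (hb : b < 0) : 0 < boundaryGap lam w j (-(b * lam + t)⁻¹) :=
  add_pos_of_nonneg_of_pos (hw.den_succ_nonneg hj) <| mul_pos (hw.den_pos j hj) <|
    neg_pos.mpr <| inv_lt_zero.mpr <| mul_add_neg_of_abs_le hw.lam_pos hb ht

theorem boundaryGap_pos_of_digit_lt (hw : IsBoundaryWord lam w L) (hj : j < L)
    (ht : |t| ≤ lam / 2) (hb : w j < b) : 0 < boundaryGap lam w j (-(b * lam + t)⁻¹) := by
  have hden : 0 < b * lam + t := mul_add_pos_of_abs_le hw.lam_pos ((hw.digit_pos hj).trans hb) ht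
  have hexcess : 0 < ((b - w j : ℤ) : K) * lam + t :=
    mul_add_pos_of_abs_le hw.lam_pos (sub_pos.mpr hb) ht
  rw [boundaryGap_neg_inv hden.ne']
  refine mul_pos (inv_pos.mpr hden) ?_
  calc 0 < boundaryDen lam w (j + 2) +
        (((b - w j : ℤ) : K) * lam + t) * boundaryDen lam w (j + 1) :=
        add_pos_of_nonneg_of_pos (hw.den_succ_nonneg (j := j + 1) hj)
          (mul_pos hexcess (hw.den_pos _ hj))
    _ = _ := by rw [boundaryGap]; push_cast; ring

theorem boundaryGap_pos_or_eq_mul (hw : IsBoundaryWord lam w L) (ha : StaysAbove w L a)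
    (hj : j ≤ L) (hpre : ∀ i < j, a (k + i) = w i) (ht : |t| ≤ lam / 2) :
    0 < boundaryGap lam w j (-(a (k + j) * lam + t)⁻¹) ∨
      j < L ∧ (∀ i < j + 1, a (k + i) = w i) ∧ ∃ c > 0,
        boundaryGap lam w j (-(a (k + j) * lam + t)⁻¹) = c * boundaryGap lam w (j + 1) t := by
  rcases ha k j hj hpre with hneg | ⟨hjL, hle⟩
  · exact Or.inl (hw.boundaryGap_pos_of_neg hj ht hneg)
  · rcases hle.lt_or_eq with hlt | heq
    · exact Or.inl (hw.boundaryGap_pos_of_digit_lt hjL ht hlt)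
    · have hden : 0 < a (k + j) * lam + t :=
        mul_add_pos_of_abs_le hw.lam_pos (heq ▸ hw.digit_pos hjL) ht
      refine Or.inr ⟨hjL, fun i hi => ?_, _, inv_pos.mpr hden, ?_⟩
      · rcases Nat.lt_succ_iff_lt_or_eq.mp hi with hi | rfl
        exacts [hpre i hi, heq.symm]
      · rw [boundaryGap_neg_inv hden.ne', heq, sub_self, zero_mul, zero_mul, add_zero]

theorem boundaryGap_cfTail_nonneg (hw : IsBoundaryWord lam w L) (ha : StaysAbove w L a)
    (hna : StaysAbove w L (-a)) (hj : j ≤ L) (hpre : ∀ i < j, a (k + i) = w i) (n : ℕ) :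
    0 ≤ boundaryGap lam w j (cfTail lam a n (k + j)) := by
  induction n generalizing a k j with
  | zero => simpa only [boundaryGap, cfTail, mul_zero, add_zero] using hw.den_succ_nonneg hj
  | succ n ih =>
    have ht : |cfTail lam a n (k + j + 1)| ≤ lam / 2 := by
      refine abs_le_iff_boundaryGap_zero_nonneg.mpr
        ⟨ih ha hna (Nat.zero_le L) (by simp), ?_⟩
      rw [← cfTail_neg]
      exact ih hna (by rwa [neg_neg]) (Nat.zero_le L) (by simp)
    rcases hw.boundaryGap_pos_or_eq_mul ha hj hpre ht with hpos | ⟨hjL, hpre', c, hc, heq⟩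
    · exact hpos.le
    · rw [cfTail, heq]
      exact mul_nonneg hc.le (ih ha hna hjL hpre')

theorem abs_cfTail_le (hw : IsBoundaryWord lam w L) (ha : StaysAbove w L a)
    (hna : StaysAbove w L (-a)) (n k : ℕ) : |cfTail lam a n k| ≤ lam / 2 := by
  refine abs_le_iff_boundaryGap_zero_nonneg.mpr
    ⟨hw.boundaryGap_cfTail_nonneg (k := k) ha hna (Nat.zero_le L) (by simp) n, ?_⟩
  rw [← cfTail_neg]
  exact hw.boundaryGap_cfTail_nonneg (k := k) hna (by rwa [neg_neg]) (Nat.zero_le L) (by simp) n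

-- Equality would propagate along the whole word, but at its end the next digit is negative.
theorem boundaryGap_pos (hw : IsBoundaryWord lam w L) (ha : StaysAbove w L a) {τ : ℕ → K}
    (hτ : ∀ k, |τ k| ≤ lam / 2) (hrec : ∀ k, τ k = -(a k * lam + τ (k + 1))⁻¹)
    (hj : j ≤ L) (hpre : ∀ i < j, a (k + i) = w i) :
    0 < boundaryGap lam w j (τ (k + j)) := by
  induction hj using Nat.decreasingInduction with
  | self =>
    rw [hrec]
    exact (hw.boundaryGap_pos_or_eq_mul ha le_rfl hpre (hτ _)).resolve_right
      fun h => h.1.false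
  | of_succ j hj ih =>
    rw [hrec]
    rcases hw.boundaryGap_pos_or_eq_mul ha hj.le hpre (hτ _) with hpos | ⟨-, hpre', c, hc, heq⟩
    · exact hpos
    · rw [heq]
      exact mul_pos hc (ih hpre')

theorem abs_lt_of_staysAbove (hw : IsBoundaryWord lam w L) (ha : StaysAbove w L a)
    (hna : StaysAbove w L (-a)) {τ : ℕ → K} (hτ : ∀ k, |τ k| ≤ lam / 2)
    (hrec : ∀ k, τ k = -(a k * lam + τ (k + 1))⁻¹) (k : ℕ) : |τ k| < lam / 2 := by
  refine abs_lt_iff_boundaryGap_zero_pos.mpr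
    ⟨hw.boundaryGap_pos (k := k) ha hτ hrec (Nat.zero_le L) (by simp),
      hw.boundaryGap_pos (k := k) (τ := -τ) hna (fun k => ?_) (fun k => ?_) (Nat.zero_le L)
        (by simp)⟩
  · simpa only [Pi.neg_apply, abs_neg] using hτ k
  · simp only [Pi.neg_apply, Int.cast_neg, neg_mul, ← neg_add, inv_neg]
    rw [← hrec k]

theorem exists_isNearestExpansion {lam x : ℝ} {A : ℕ → ℤ} (hw : IsBoundaryWord lam w L)
    (hA0 : ∀ i, A (i + 1) ≠ 0) (hA : StaysAbove w L fun i => A (i + 1))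
    (hnA : StaysAbove w L (-fun i => A (i + 1)))
    (hx : Tendsto (fun n => cfP lam A n / cfQ lam A n) atTop (𝓝 x)) :
    ∃ X : ℕ → ℝ, X 0 = x ∧ IsNearestExpansion lam A X := by
  have hbound := hw.abs_cfTail_le hA hnA
  have hden : ∀ n k, A (k + 1) * lam + cfTail lam (fun i => A (i + 1)) n (k + 1) ≠ 0 :=
    fun n k => mul_add_ne_zero_of_abs_le hw.lam_pos (hA0 k) (hbound n (k + 1))
  have htail : Tendsto (fun n => cfTail lam (fun i => A (i + 1)) n 0) atTop
      (𝓝 (x - A 0 * lam)) := by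
    simpa only [cfP_div_cfQ_eq_add_cfTail hden, add_sub_cancel_left]
      using hx.sub_const (A 0 * lam)
  obtain ⟨τ, hτ0, hτ, hrec⟩ := exists_tendsto_cfTail hbound hden htail
  refine ⟨fun k => A k * lam + τ k, by simp only [hτ0, add_sub_cancel],
    fun k => ?_, fun k => ?_⟩
  · simpa only [add_sub_cancel_left] using hw.abs_lt_of_staysAbove hA hnA hτ hrec k
  · rw [sub_eq_add_neg, ← hrec k]

end IsBoundaryWord

end Boundary

section Trigonometry

theorem boundaryDen_eq_mul_cos {θ c β : ℝ} {w : ℕ → ℤ} {m n : ℕ}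
    (h₀ : boundaryDen (2 * Real.cos θ) w m = c * Real.cos β)
    (h₁ : boundaryDen (2 * Real.cos θ) w (m + 1) = c * Real.cos (β + θ))
    (hw : ∀ i < n, w (m + i) = 1) {i : ℕ} (hi : i ≤ n + 1) :
    boundaryDen (2 * Real.cos θ) w (m + i) = c * Real.cos (β + i * θ) := by
  induction i using Nat.twoStepInduction with
  | zero => simpa using h₀
  | one => simpa using h₁
  | more i ih₀ ih₁ =>
    have hcos : Real.cos (β + (i + 2) * θ) + Real.cos (β + i * θ) =
        2 * Real.cos (β + (i + 1) * θ) * Real.cos θ := by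
      rw [Real.cos_add_cos]; ring_nf
    have ih₁ := ih₁ (by omega)
    rw [← add_assoc] at ih₁
    rw [← add_assoc, boundaryDen, hw i (by omega), ih₀ (by omega), ih₁]
    push_cast
    linear_combination -c * hcos

theorem boundaryDen_eq_two_mul_cos {θ : ℝ} {w : ℕ → ℤ} {n j : ℕ} (hw : ∀ i < n, w i = 1)
    (hj : j ≤ n + 1) : boundaryDen (2 * Real.cos θ) w j = 2 * Real.cos (j * θ) := by
  simpa using boundaryDen_eq_mul_cos (m := 0) (c := 2) (β := 0) (by simp [boundaryDen])
    (by simp [boundaryDen]) (by simpa using hw) hj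

theorem isBoundaryWord_one {θ : ℝ} {h : ℕ} (hh : 1 ≤ h) (hθ : (h + 1) * θ = Real.pi / 2) :
    IsBoundaryWord (2 * Real.cos θ) (fun _ => 1) h := by
  have hθ_pos : 0 < θ := by
    refine pos_of_mul_pos_right (a := (h : ℝ) + 1) ?_ (by positivity)
    rw [hθ]; exact Real.pi_div_two_pos
  have hden : ∀ j ≤ h + 1, boundaryDen (2 * Real.cos θ) (fun _ => 1) j = 2 * Real.cos (j * θ) :=
    fun j hj => boundaryDen_eq_two_mul_cos (fun _ _ => rfl) hj
  have hpos : ∀ j ≤ h, 0 < boundaryDen (2 * Real.cos θ) (fun _ => 1) j := by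
    intro j hj
    have hj' : (j : ℝ) < h + 1 := by exact_mod_cast Nat.lt_succ_of_le hj
    have hcos : 0 < Real.cos (j * θ) := Real.cos_pos_of_mem_Ioo
      ⟨by linarith [Real.pi_pos, mul_nonneg j.cast_nonneg hθ_pos.le],
        hθ ▸ mul_lt_mul_of_pos_right hj' hθ_pos⟩
    rw [hden j (by omega)]
    positivity
  refine ⟨hpos 1 hh, hpos, ?_⟩
  rw [hden (h + 1) le_rfl, Nat.cast_succ, hθ, Real.cos_pi_div_two, mul_zero]

theorem boundaryDen_one_two_one_eq_mul_cos {θ : ℝ} {h i : ℕ} (hθ : (h + 3 / 2) * θ = Real.pi / 2)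
    (hcos : Real.cos (θ / 2) ≠ 0) (hi : i ≤ h + 1) :
    boundaryDen (2 * Real.cos θ) (fun i => if i = h then 2 else 1) (h + 1 + i) =
      2 * Real.tan (θ / 2) * Real.cos (θ / 2 + i * θ) := by
  have hfirst : ∀ j ≤ h + 1, boundaryDen (2 * Real.cos θ) (fun i => if i = h then 2 else 1) j =
      2 * Real.cos (j * θ) :=
    fun j hj => boundaryDen_eq_two_mul_cos (fun i hi => if_neg hi.ne) hj
  have hlast : Real.cos ((h + 1) * θ) = Real.sin (θ / 2) := by
    rw [← Real.cos_pi_div_two_sub, ← hθ]; ring_nf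
  have hprev : Real.cos (h * θ) = Real.sin (θ + θ / 2) := by
    rw [← Real.cos_pi_div_two_sub, ← hθ]; ring_nf
  have hdouble : Real.sin θ = 2 * Real.sin (θ / 2) * Real.cos (θ / 2) := by
    rw [← Real.sin_two_mul, mul_div_cancel₀ θ two_ne_zero]
  have hdouble' : Real.cos θ = Real.cos (θ / 2) ^ 2 - Real.sin (θ / 2) ^ 2 := by
    rw [← Real.cos_two_mul', mul_div_cancel₀ θ two_ne_zero]
  refine boundaryDen_eq_mul_cos ?_ ?_ (fun i _ => if_neg (by omega)) hi
  · rw [hfirst _ le_rfl, Nat.cast_succ, hlast, mul_assoc, Real.tan_mul_cos hcos]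
  · rw [boundaryDen, hfirst _ le_rfl, hfirst h (by omega), if_pos rfl, Nat.cast_succ, hlast, hprev,
      Real.sin_add, Real.cos_add, hdouble, Real.tan_eq_sin_div_cos]
    field_simp
    push_cast
    linear_combination 2 * Real.sin (θ / 2) * hdouble'

theorem isBoundaryWord_one_two_one {θ : ℝ} {h : ℕ} (hθ : (h + 3 / 2) * θ = Real.pi / 2) :
    IsBoundaryWord (2 * Real.cos θ) (fun i => if i = h then 2 else 1) (2 * h + 1) := by
  have hθ_pos : 0 < θ := by
    refine pos_of_mul_pos_right (a := (h : ℝ) + 3 / 2) ?_ (by positivity)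
    rw [hθ]; exact Real.pi_div_two_pos
  have hcos : ∀ s : ℝ, 0 ≤ s → s < h + 3 / 2 → 0 < Real.cos (s * θ) := fun s hs hs' =>
    Real.cos_pos_of_mem_Ioo
      ⟨by linarith [Real.pi_pos, mul_nonneg hs hθ_pos.le],
        hθ ▸ mul_lt_mul_of_pos_right hs' hθ_pos⟩
  have hhalf_lt : θ / 2 < Real.pi / 2 := by
    linarith [mul_nonneg h.cast_nonneg hθ_pos.le]
  have hcos_half : 0 < Real.cos (θ / 2) :=
    Real.cos_pos_of_mem_Ioo ⟨by linarith, hhalf_lt⟩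
  have htan : 0 < Real.tan (θ / 2) :=
    Real.tan_pos_of_pos_of_lt_pi_div_two (half_pos hθ_pos) hhalf_lt
  have hpos : ∀ j ≤ 2 * h + 1,
      0 < boundaryDen (2 * Real.cos θ) (fun i => if i = h then 2 else 1) j := by
    intro j hj
    rcases le_or_gt j (h + 1) with hjh | hjh
    · have hj' : (j : ℝ) ≤ h + 1 := by exact_mod_cast hjh
      rw [boundaryDen_eq_two_mul_cos (fun i hi => if_neg hi.ne) hjh]
      exact mul_pos two_pos (hcos j j.cast_nonneg (by linarith))
    · obtain ⟨i, rfl⟩ := Nat.exists_eq_add_of_le hjh.le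
      have hi : (i : ℝ) ≤ h := by exact_mod_cast (by omega : i ≤ h)
      rw [boundaryDen_one_two_one_eq_mul_cos hθ hcos_half.ne' (by omega),
        show θ / 2 + i * θ = (i + 1 / 2) * θ by ring]
      exact mul_pos (mul_pos two_pos htan) (hcos _ (by positivity) (by linarith))
  refine ⟨hpos 1 (by omega), hpos, ?_⟩
  rw [show 2 * h + 1 + 1 = h + 1 + (h + 1) by ring,
    boundaryDen_one_two_one_eq_mul_cos hθ hcos_half.ne' le_rfl,
    show θ / 2 + (h + 1 : ℕ) * θ = (h + 3 / 2) * θ by push_cast; ring, hθ,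
    Real.cos_pi_div_two, mul_zero]

end Trigonometry

section Regularity

theorem IsForbidden.map_neg_s5 {q : ℕ} {l : List ℤ} (hl : IsForbidden q l) :
    IsForbidden q (l.map Neg.neg) := by
  obtain ⟨ε, hε, hl⟩ := hl
  refine ⟨-ε, by omega, hl.imp (by rintro rfl; simp) fun hl => ?_⟩
  split_ifs at hl ⊢ <;> obtain ⟨m, hm, rfl⟩ := hl <;> exact ⟨m, hm, by simp⟩

theorem RegularSeq.neg_s5 {q : ℕ} {a : ℕ → ℤ} (ha : RegularSeq q a) : RegularSeq q (-a) := by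
  intro l len hforb
  refine ha l len ?_
  simpa [List.map_ofFn, Function.comp_def] using hforb.map_neg_s5

theorem ofFn_add_eq_concat {α : Type*} {a w : ℕ → α} {k j : ℕ}
    (hpre : ∀ i < j, a (k + i) = w i) :
    List.ofFn (fun i : Fin (j + 1) => a (k + i)) =
      List.ofFn (fun i : Fin j => w i) ++ [a (k + j)] := by
  rw [List.ofFn_succ', List.concat_eq_append]
  simp [hpre]

theorem ofFn_ite_eq_append {α : Type*} (b c : α) (h : ℕ) :
    List.ofFn (fun i : Fin (2 * h + 1) => if (i : ℕ) = h then c else b) =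
      List.replicate h b ++ c :: List.replicate h b := by
  apply List.ext_getElem
  · simp; omega
  · intro i _ _
    grind

variable {q : ℕ} {a : ℕ → ℤ}

theorem RegularSeq.staysAbove_of_even (hq : Even q) (ha0 : ∀ i, a i ≠ 0) (ha : RegularSeq q a) :
    StaysAbove (fun _ => 1) (hQ q) a := by
  intro k j hj hpre
  rcases (ha0 (k + j)).lt_or_gt with hneg | hpos
  · exact Or.inl hneg
  rcases hj.lt_or_eq with hj | rfl
  · exact Or.inr ⟨hj, hpos⟩
  · refine absurd ⟨1, Or.inl rfl, Or.inr ?_⟩ (ha k (hQ q + 1))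
    rw [if_pos hq]
    exact ⟨a (k + hQ q), hpos, by rw [ofFn_add_eq_concat hpre, List.ofFn_const, one_mul]⟩

theorem RegularSeq.staysAbove_of_odd (hq : ¬Even q) (ha0 : ∀ i, a i ≠ 0) (ha : RegularSeq q a) :
    StaysAbove (fun i => if i = hQ q then 2 else 1) (2 * hQ q + 1) a := by
  intro k j hj hpre
  rcases (ha0 (k + j)).lt_or_gt with hneg | hpos
  · exact Or.inl hneg
  rcases hj.lt_or_eq with hj | rfl
  · refine Or.inr ⟨hj, ?_⟩
    change (if j = hQ q then 2 else 1) ≤ a (k + j)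
    split_ifs with hjh
    · subst hjh
      have hne : a (k + hQ q) ≠ 1 := by
        intro hone
        refine ha k (hQ q + 1) ⟨1, Or.inl rfl, Or.inl ?_⟩
        have hpre' : ∀ i < hQ q, a (k + i) = 1 := fun i hi => (hpre i hi).trans (if_neg hi.ne)
        rw [ofFn_add_eq_concat (w := fun _ => 1) hpre', List.ofFn_const, hone,
          List.replicate_succ']
      omega
    · exact hpos
  · refine absurd ⟨1, Or.inl rfl, Or.inr ?_⟩ (ha k (2 * hQ q + 1 + 1))
    rw [if_neg hq]
    refine ⟨a (k + (2 * hQ q + 1)), hpos, ?_⟩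
    rw [ofFn_add_eq_concat hpre, ofFn_ite_eq_append]
    simp only [one_mul, List.append_assoc, List.cons_append]

theorem exists_isBoundaryWord_staysAbove (hq : 3 ≤ q) :
    ∃ w L, IsBoundaryWord (lamq q) w L ∧
      ∀ a : ℕ → ℤ, (∀ i, a i ≠ 0) → RegularSeq q a → StaysAbove w L a := by
  have hq0 : (q : ℝ) ≠ 0 := by positivity
  by_cases he : Even q
  · have hqh : q = 2 * hQ q + 2 := by rw [hQ, if_pos he]; have := he.two_dvd; omega
    have hqh' : (q : ℝ) = 2 * hQ q + 2 := by exact_mod_cast hqh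
    have hθ : ((hQ q : ℝ) + 1) * (Real.pi / q) = Real.pi / 2 := by
      field_simp; linear_combination -hqh'
    exact ⟨_, _, isBoundaryWord_one (by omega) hθ, fun _ => RegularSeq.staysAbove_of_even he⟩
  · have hqh : q = 2 * hQ q + 3 := by
      have := Nat.not_even_iff.mp he
      rw [hQ, if_neg he]; omega
    have hqh' : (q : ℝ) = 2 * hQ q + 3 := by exact_mod_cast hqh
    have hθ : ((hQ q : ℝ) + 3 / 2) * (Real.pi / q) = Real.pi / 2 := by
      field_simp; linear_combination -hqh'
    exact ⟨_, _, isBoundaryWord_one_two_one hθ, fun _ => RegularSeq.staysAbove_of_odd he⟩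

end Regularity

/-- The lexicographic order on regular `λ_q`-CF's agrees with the order of their values:
if `n` is the least index where the digit sequences of `x` and `y` differ, then `x < y`
iff (i) `n = 0` and `a₀ < b₀`, or (ii) `n ≥ 1`, `aₙbₙ < 0` and `aₙ > 0`, or
(iii) `n ≥ 1`, `aₙbₙ > 0` and `aₙ < bₙ`. -/
theorem stmt5 (q : ℕ) (hq : 3 ≤ q) (A B : ℕ → ℤ) (x y : ℝ)
    (hAnz : ∀ i, A (i + 1) ≠ 0) (hAreg : RegularSeq q (fun i => A (i + 1)))
    (hBnz : ∀ i, B (i + 1) ≠ 0) (hBreg : RegularSeq q (fun i => B (i + 1)))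
    (hx : CFConvergesTo (lamq q) A x) (hy : CFConvergesTo (lamq q) B y)
    (n : ℕ) (hne : A n ≠ B n) (hmin : ∀ m < n, A m = B m) :
    x < y ↔
      ((n = 0 ∧ A 0 < B 0) ∨
        (1 ≤ n ∧ A n * B n < 0 ∧ 0 < A n) ∨
        (1 ≤ n ∧ 0 < A n * B n ∧ A n < B n)) := by
  obtain ⟨w, L, hw, habove⟩ := exists_isBoundaryWord_staysAbove hq
  have habove_neg : ∀ C : ℕ → ℤ, (∀ i, C (i + 1) ≠ 0) → RegularSeq q (fun i => C (i + 1)) →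
      StaysAbove w L (-fun i => C (i + 1)) := fun C hC hreg =>
    habove _ (fun i => neg_ne_zero.mpr (hC i)) hreg.neg_s5
  obtain ⟨X, rfl, hX⟩ :=
    hw.exists_isNearestExpansion hAnz (habove _ hAnz hAreg) (habove_neg A hAnz hAreg) hx.2
  obtain ⟨Y, rfl, hY⟩ :=
    hw.exists_isNearestExpansion hBnz (habove _ hBnz hBreg) (habove_neg B hBnz hBreg) hy.2
  exact hX.lt_iff_of_first_digit_ne hY hAnz hBnz hne hmin
end
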